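/- Consider the DAT-SGD sequences generated with a gossip matrix P that satisfies the ρ-contraction property for some ρ ∈ (0,1], with a non-decreasing weight sequence (α_t). Then for every t ≥ 1 the consensus distance of the query points satisfies Γ_{t+1} ≤ (1 − ρ/2)·Γ_t + (4η² α_t² δ_t²/ρ)·(Ψ_t + (2/ρ)·Σ_{τ=1}^{t−1} (1 − ρ/2)^{t−1−τ} Ψ_τ), where δ_t := α_t/α_{1:t}. -/

import Mathlib

/-! If a mixing map `G` contracts the consensus distance `D` by `1 - ρ`, Young's inequality with
parameter `ρ / 2` gives `D (G (Y + Z)) ≤ (1 - ρ / 2) * D Y + 2 / ρ * D Z`, because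
`(1 - ρ) * (1 + ρ / 2) ≤ 1 - ρ / 2` and `(1 - ρ) * (1 + 2 / ρ) ≤ 2 / ρ`. Applied to the `w` update,
with the gradient step as the perturbation, this is a linear recursion started at consensus, and
discrete Grönwall together with the monotonicity of the weights bounds `D (w t)` by a geometric sum
of past gradient disagreements. Applied to the `x` update, the perturbation is the half step
`w t - (η * α t) • g t` weighted by `α t / A t`, and the bound on `D (w t)` controls it. -/

open Finset

lemma le_mul_sum_pow_of_le_mul_add {R : Type*} [CommSemiring R] [PartialOrder R] [IsOrderedRing R]
    {u c v : ℕ → R} {q : R} {n₀ n : ℕ} (hq : 0 ≤ q) (hc : MonotoneOn c (Set.Ici n₀))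
    (hv : ∀ k ≥ n₀, 0 ≤ v k) (hu₀ : u n₀ ≤ 0)
    (hu : ∀ k ≥ n₀, u (k + 1) ≤ q * u k + c k * v k) (hn : n₀ ≤ n) :
    u n ≤ c n * ∑ k ∈ Ico n₀ n, q ^ (n - 1 - k) * v k := by
  calc u n
      ≤ u n₀ * ∏ _i ∈ Ico n₀ n, q + ∑ k ∈ Ico n₀ n, c k * v k * ∏ _i ∈ Ico (k + 1) n, q :=
        discrete_gronwall_prod_general hu (fun _ _ ↦ hq) hn
    _ ≤ ∑ k ∈ Ico n₀ n, c k * v k * ∏ _i ∈ Ico (k + 1) n, q :=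
        add_le_of_nonpos_left (mul_nonpos_of_nonpos_of_nonneg hu₀ (prod_nonneg fun _ _ ↦ hq))
    _ ≤ ∑ k ∈ Ico n₀ n, c n * (q ^ (n - 1 - k) * v k) := by
        refine sum_le_sum fun k hk ↦ ?_
        obtain ⟨hk₀, hkn⟩ := mem_Ico.mp hk
        have hvk := hv k hk₀
        have hck : c k ≤ c n := hc hk₀ hn hkn.le
        rw [prod_const, Nat.card_Ico, Nat.sub_add_eq, Nat.sub_right_comm, mul_assoc,
          mul_comm (v k)]
        gcongr
    _ = c n * ∑ k ∈ Ico n₀ n, q ^ (n - 1 - k) * v k := (mul_sum ..).symm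

lemma sum_Icc_pred_div_sum_Icc_mem_unitInterval {K : Type*} [Field K] [LinearOrder K]
    [IsStrictOrderedRing K] {α : ℕ → K} (hα : ∀ t ≥ 1, 0 ≤ α t) (t : ℕ) :
    (∑ τ ∈ Icc 1 (t - 1), α τ) / ∑ τ ∈ Icc 1 t, α τ ∈ Set.Icc 0 1 := by
  have hnonneg (s : ℕ) : 0 ≤ ∑ τ ∈ Icc 1 s, α τ := sum_nonneg fun τ hτ ↦ hα τ (mem_Icc.mp hτ).1
  have hle : ∑ τ ∈ Icc 1 (t - 1), α τ ≤ ∑ τ ∈ Icc 1 t, α τ :=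
    sum_le_sum_of_subset_of_nonneg (Icc_subset_Icc_right (Nat.sub_le t 1))
      fun τ hτ _ ↦ hα τ (mem_Icc.mp hτ).1
  exact ⟨div_nonneg (hnonneg _) (hnonneg _), div_le_one_of_le₀ hle (hnonneg _)⟩

section

variable {ι E : Type*} [Fintype ι] [SeminormedAddCommGroup E]

lemma norm_add_sq_le_young (a b : E) {c : ℝ} (hc : 0 < c) :
    ‖a + b‖ ^ 2 ≤ (1 + c) * ‖a‖ ^ 2 + (1 + c⁻¹) * ‖b‖ ^ 2 := by
  calc ‖a + b‖ ^ 2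
      ≤ (‖a‖ + ‖b‖) ^ 2 := by gcongr; exact norm_add_le a b
    _ = ‖a‖ ^ 2 + 2 * ‖a‖ * ‖b‖ + ‖b‖ ^ 2 := add_sq _ _
    _ ≤ ‖a‖ ^ 2 + (c * ‖a‖ ^ 2 + c⁻¹ * ‖b‖ ^ 2) + ‖b‖ ^ 2 := by
        gcongr; exact two_mul_le_add_mul_sq hc
    _ = (1 + c) * ‖a‖ ^ 2 + (1 + c⁻¹) * ‖b‖ ^ 2 := by ring

variable [NormedSpace ℝ E]

/-- The consensus distance of a family of vectors, one per node: the mean squared distance to the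
average. This is `Γ`, `Ξ` and `Ψ` when `Y` is `x t`, `w t` and `g t`. -/
noncomputable def consensusDist (Y : ι → E) : ℝ :=
  (Fintype.card ι : ℝ)⁻¹ * ∑ i, ‖Y i - (Fintype.card ι : ℝ)⁻¹ • ∑ j, Y j‖ ^ 2

lemma consensusDist_nonneg (Y : ι → E) : 0 ≤ consensusDist Y := by
  unfold consensusDist
  positivity

lemma consensusDist_const (v : E) : consensusDist (fun _ : ι ↦ v) = 0 := by
  cases isEmpty_or_nonempty ι <;>
    simp [consensusDist, ← Nat.cast_smul_eq_nsmul ℝ, smul_smul]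

lemma consensusDist_smul (a : ℝ) (Y : ι → E) :
    consensusDist (a • Y) = a ^ 2 * consensusDist Y := by
  have hdev (i : ι) : ‖a • Y i - (Fintype.card ι : ℝ)⁻¹ • ∑ j, a • Y j‖ ^ 2
      = a ^ 2 * ‖Y i - (Fintype.card ι : ℝ)⁻¹ • ∑ j, Y j‖ ^ 2 := by
    rw [← smul_sum, smul_comm, ← smul_sub, norm_smul, mul_pow, Real.norm_eq_abs, sq_abs]
  simp only [consensusDist, Pi.smul_apply, hdev, ← mul_sum]
  ring

lemma consensusDist_add_le (Y Z : ι → E) {c : ℝ} (hc : 0 < c) :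
    consensusDist (Y + Z) ≤ (1 + c) * consensusDist Y + (1 + c⁻¹) * consensusDist Z := by
  set m : ℝ := (Fintype.card ι : ℝ)⁻¹ with hm
  calc consensusDist (Y + Z)
      = m * ∑ i, ‖(Y i - m • ∑ j, Y j) + (Z i - m • ∑ j, Z j)‖ ^ 2 := by
        simp only [consensusDist, Pi.add_apply, sum_add_distrib, smul_add, add_sub_add_comm, hm]
    _ ≤ m * ∑ i, ((1 + c) * ‖Y i - m • ∑ j, Y j‖ ^ 2
          + (1 + c⁻¹) * ‖Z i - m • ∑ j, Z j‖ ^ 2) := by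
        gcongr
        exact norm_add_sq_le_young _ _ hc
    _ = (1 + c) * consensusDist Y + (1 + c⁻¹) * consensusDist Z := by
        simp only [consensusDist, sum_add_distrib, ← mul_sum, ← hm]
        ring

lemma consensusDist_sub_smul_le (Y Z : ι → E) (a : ℝ) :
    consensusDist (Y - a • Z) ≤ 2 * consensusDist Y + 2 * (a ^ 2 * consensusDist Z) := by
  calc consensusDist (Y - a • Z)
      = consensusDist (Y + (-a) • Z) := by rw [neg_smul, sub_eq_add_neg]
    _ ≤ (1 + 1) * consensusDist Y + (1 + 1⁻¹) * consensusDist ((-a) • Z) :=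
        consensusDist_add_le _ _ one_pos
    _ = 2 * consensusDist Y + 2 * (a ^ 2 * consensusDist Z) := by
        rw [consensusDist_smul, neg_sq, inv_one, one_add_one_eq_two]

/-- A mixing map `G`, such as one round of gossip, that shrinks the consensus distance by the
factor `1 - ρ`. It acts on all nodes at once and need not be given by a matrix. -/
def IsConsensusContraction (ρ : ℝ) (G : (ι → E) → ι → E) : Prop :=
  ∀ Y, consensusDist (G Y) ≤ (1 - ρ) * consensusDist Y

lemma isConsensusContraction_of_sum_col_eq_one {P : Matrix ι ι ℝ} (hP : ∀ j, ∑ i, P i j = 1)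
    {ρ : ℝ} (hρ : ∀ Y : ι → E,
      ∑ i, ‖(∑ j, P i j • Y j) - (Fintype.card ι : ℝ)⁻¹ • ∑ j, Y j‖ ^ 2
        ≤ (1 - ρ) * ∑ i, ‖Y i - (Fintype.card ι : ℝ)⁻¹ • ∑ j, Y j‖ ^ 2) :
    IsConsensusContraction ρ (fun (Y : ι → E) i ↦ ∑ j, P i j • Y j) := by
  intro Y
  have hsum : ∑ i, ∑ j, P i j • Y j = ∑ j, Y j := by
    rw [sum_comm]
    simp only [← sum_smul, hP, one_smul]
  unfold consensusDist
  rw [hsum, mul_left_comm]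
  gcongr
  exact hρ Y

namespace IsConsensusContraction

variable {ρ : ℝ}

lemma consensusDist_apply_add_le {G : (ι → E) → ι → E} (hG : IsConsensusContraction ρ G)
    (hρ : ρ ∈ Set.Ioc (0 : ℝ) 1) (Y Z : ι → E) :
    consensusDist (G (Y + Z)) ≤ (1 - ρ / 2) * consensusDist Y + 2 / ρ * consensusDist Z := by
  obtain ⟨hρ₀, hρ₁⟩ := hρ
  have hfst : (1 - ρ) * (1 + ρ / 2) ≤ 1 - ρ / 2 := by nlinarith [sq_nonneg ρ]
  have hsnd : (1 - ρ) * (1 + (ρ / 2)⁻¹) ≤ 2 / ρ := by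
    rw [inv_div]
    have : ρ * (2 / ρ) = 2 := mul_div_cancel₀ 2 hρ₀.ne'
    linarith
  have hY := consensusDist_nonneg Y
  have hZ := consensusDist_nonneg Z
  calc consensusDist (G (Y + Z))
      ≤ (1 - ρ) * consensusDist (Y + Z) := hG _
    _ ≤ (1 - ρ) * ((1 + ρ / 2) * consensusDist Y + (1 + (ρ / 2)⁻¹) * consensusDist Z) :=
        mul_le_mul_of_nonneg_left (consensusDist_add_le Y Z (half_pos hρ₀))
          (sub_nonneg.mpr hρ₁)
    _ = (1 - ρ) * (1 + ρ / 2) * consensusDist Y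
          + (1 - ρ) * (1 + (ρ / 2)⁻¹) * consensusDist Z := by ring
    _ ≤ (1 - ρ / 2) * consensusDist Y + 2 / ρ * consensusDist Z := by gcongr

lemma consensusDist_apply_smul_add_smul_sub_le {G : (ι → E) → ι → E}
    (hG : IsConsensusContraction ρ G) (hρ : ρ ∈ Set.Ioc (0 : ℝ) 1) {a : ℝ}
    (ha : a ∈ Set.Icc (0 : ℝ) 1) (δ γ : ℝ) (X W g : ι → E) :
    consensusDist (G (a • X + δ • (W - γ • g))) ≤ (1 - ρ / 2) * consensusDist X
      + 2 / ρ * (δ ^ 2 * (2 * consensusDist W + 2 * (γ ^ 2 * consensusDist g))) := by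
  have hρ₀ := hρ.1
  calc consensusDist (G (a • X + δ • (W - γ • g)))
      ≤ (1 - ρ / 2) * (a ^ 2 * consensusDist X) + 2 / ρ * (δ ^ 2 * consensusDist (W - γ • g)) := by
        simpa only [consensusDist_smul] using
          hG.consensusDist_apply_add_le hρ (a • X) (δ • (W - γ • g))
    _ ≤ _ := by
        gcongr
        · linarith [hρ.2]
        · exact mul_le_of_le_one_left (consensusDist_nonneg X) (pow_le_one₀ ha.1 ha.2)
        · exact consensusDist_sub_smul_le W g γ

end IsConsensusContraction

lemma consensusDist_gossip_descent_le {ρ : ℝ} {G : ℕ → (ι → E) → ι → E}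
    (hG : ∀ t ≥ 1, IsConsensusContraction ρ (G t)) (hρ : ρ ∈ Set.Ioc (0 : ℝ) 1) {γ : ℕ → ℝ}
    (hγ : MonotoneOn (fun t ↦ γ t ^ 2) (Set.Ici 1)) {g w : ℕ → ι → E}
    (hw₁ : consensusDist (w 1) = 0) (hw : ∀ t ≥ 1, w (t + 1) = G t (w t - γ t • g t))
    {t : ℕ} (ht : 1 ≤ t) :
    consensusDist (w t)
      ≤ 2 / ρ * γ t ^ 2 * ∑ τ ∈ Ico 1 t, (1 - ρ / 2) ^ (t - 1 - τ) * consensusDist (g τ) := by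
  have hstep (s : ℕ) (hs : s ≥ 1) : consensusDist (w (s + 1))
      ≤ (1 - ρ / 2) * consensusDist (w s) + 2 / ρ * γ s ^ 2 * consensusDist (g s) := by
    have h := (hG s hs).consensusDist_apply_add_le hρ (w s) ((-γ s) • g s)
    rwa [consensusDist_smul, neg_sq, neg_smul, ← sub_eq_add_neg, ← hw s hs, ← mul_assoc] at h
  have hmono : MonotoneOn (fun t ↦ 2 / ρ * γ t ^ 2) (Set.Ici 1) :=
    fun r hr s hs hrs ↦ mul_le_mul_of_nonneg_left (hγ hr hs hrs) (div_nonneg zero_le_two hρ.1.le)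
  exact le_mul_sum_pow_of_le_mul_add (u := fun t ↦ consensusDist (w t)) (by linarith [hρ.2])
    hmono (fun s _ ↦ consensusDist_nonneg (g s)) hw₁.le hstep ht

theorem stmt_9_general {η ρ : ℝ} (hρ : ρ ∈ Set.Ioc (0 : ℝ) 1)
    {α A : ℕ → ℝ} (hα_nonneg : ∀ t ≥ 1, 0 ≤ α t) (hα_mono : MonotoneOn α (Set.Ici 1))
    (hA : ∀ t, A t = ∑ τ ∈ Icc 1 t, α τ)
    {G : ℕ → (ι → E) → ι → E} (hG : ∀ t ≥ 1, IsConsensusContraction ρ (G t))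
    {g w x : ℕ → ι → E} (hw₁ : consensusDist (w 1) = 0)
    (hw : ∀ t ≥ 1, w (t + 1) = G t (w t - (η * α t) • g t))
    (hx : ∀ t ≥ 1, x (t + 1) =
      G t ((A (t - 1) / A t) • x t + (α t / A t) • (w t - (η * α t) • g t)))
    {t : ℕ} (ht : 1 ≤ t) :
    consensusDist (x (t + 1)) ≤ (1 - ρ / 2) * consensusDist (x t)
      + (4 * η ^ 2 * α t ^ 2 * (α t / A t) ^ 2 / ρ) * (consensusDist (g t)
        + (2 / ρ) * ∑ τ ∈ Icc 1 (t - 1), (1 - ρ / 2) ^ (t - 1 - τ) * consensusDist (g τ)) := by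
  have hρ₀ := hρ.1
  have hratio : A (t - 1) / A t ∈ Set.Icc (0 : ℝ) 1 := by
    rw [hA, hA]
    exact sum_Icc_pred_div_sum_Icc_mem_unitInterval hα_nonneg t
  have hstep_mono : MonotoneOn (fun s ↦ (η * α s) ^ 2) (Set.Ici 1) := fun r hr s hs hrs ↦ by
    have hαr := hα_nonneg r hr
    have hαrs := hα_mono hr hs hrs
    simp only [mul_pow]
    gcongr
  rw [hx t ht, Icc_sub_one_right_eq_Ico_of_not_isMin (not_isMin_of_lt ht)]
  calc consensusDist (G t ((A (t - 1) / A t) • x t + (α t / A t) • (w t - (η * α t) • g t)))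
      ≤ (1 - ρ / 2) * consensusDist (x t) + 2 / ρ * ((α t / A t) ^ 2
          * (2 * consensusDist (w t) + 2 * ((η * α t) ^ 2 * consensusDist (g t)))) :=
        (hG t ht).consensusDist_apply_smul_add_smul_sub_le hρ hratio _ _ _ _ _
    _ ≤ (1 - ρ / 2) * consensusDist (x t) + 2 / ρ * ((α t / A t) ^ 2
          * (2 * (2 / ρ * (η * α t) ^ 2
              * ∑ τ ∈ Ico 1 t, (1 - ρ / 2) ^ (t - 1 - τ) * consensusDist (g τ))
            + 2 * ((η * α t) ^ 2 * consensusDist (g t)))) := by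
        gcongr
        exact consensusDist_gossip_descent_le hG hρ hstep_mono hw₁ hw ht
    _ = _ := by ring

end

/-- For DAT-SGD with a gossip matrix `P` satisfying the ρ-contraction
property and non-decreasing weights, for every `t ≥ 1` the consensus distance of the
query points satisfies `Γ_{t+1} ≤ (1 − ρ/2)·Γ_t + (4η² α_t² δ_t²/ρ)·(Ψ_t +
(2/ρ)·Σ_{τ=1}^{t−1} (1 − ρ/2)^{t−1−τ} Ψ_τ)` where `δ_t = α_t/α_{1:t}`. -/
theorem stmt_9
    (d M : ℕ) (hd : 1 ≤ d) (hM : 1 ≤ M)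
    (η : ℝ) (hη : 0 < η)
    (α : ℕ → ℝ) (hα_nonneg : ∀ t ≥ 1, 0 ≤ α t) (hα1 : 0 < α 1)
    (A : ℕ → ℝ) (hA : ∀ t, A t = ∑ τ ∈ Finset.Icc 1 t, α τ)
    (P : Matrix (Fin M) (Fin M) ℝ)
    (hP_symm : P.IsSymm)
    (hP_nonneg : ∀ i j, 0 ≤ P i j) (hP_le_one : ∀ i j, P i j ≤ 1)
    (hP_rows : ∀ i, ∑ j, P i j = 1) (hP_cols : ∀ j, ∑ i, P i j = 1)
    (w₁ : EuclideanSpace ℝ (Fin d))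
    (g w x : ℕ → Fin M → EuclideanSpace ℝ (Fin d))
    (hw1 : ∀ i, w 1 i = w₁) (hx1 : ∀ i, x 1 i = w₁)
    (hwrec : ∀ t ≥ 1, ∀ i,
      w (t + 1) i = ∑ j, P i j • (w t j - (η * α t) • g t j))
    (hxrec : ∀ t ≥ 1, ∀ i,
      x (t + 1) i = ∑ j, P i j •
        ((A (t - 1) / A t) • x t j + (α t / A t) • (w t j - (η * α t) • g t j)))
    (hα_mono : ∀ t ≥ 1, α t ≤ α (t + 1))
    (ρ : ℝ) (hρ : ρ ∈ Set.Ioc (0 : ℝ) 1)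
    (hP_contract : ∀ Y : Fin M → EuclideanSpace ℝ (Fin d),
      ∑ i, ‖(∑ j, P i j • Y j) - (M : ℝ)⁻¹ • ∑ j, Y j‖ ^ 2
        ≤ (1 - ρ) * ∑ i, ‖Y i - (M : ℝ)⁻¹ • ∑ j, Y j‖ ^ 2)
    (Γ Ξ Ψ : ℕ → ℝ)
    (hΓ : ∀ t, Γ t = (M : ℝ)⁻¹ * ∑ i, ‖x t i - (M : ℝ)⁻¹ • ∑ j, x t j‖ ^ 2)
    (hΞ : ∀ t, Ξ t = (M : ℝ)⁻¹ * ∑ i, ‖w t i - (M : ℝ)⁻¹ • ∑ j, w t j‖ ^ 2)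
    (hΨ : ∀ t, Ψ t = (M : ℝ)⁻¹ * ∑ i, ‖g t i - (M : ℝ)⁻¹ • ∑ j, g t j‖ ^ 2)
    :
    ∀ t ≥ 1,
      Γ (t + 1) ≤ (1 - ρ / 2) * Γ t
        + (4 * η ^ 2 * (α t) ^ 2 * (α t / A t) ^ 2 / ρ)
          * (Ψ t + (2 / ρ) * ∑ τ ∈ Finset.Icc 1 (t - 1), (1 - ρ / 2) ^ (t - 1 - τ) * Ψ τ) := by
  have hG : IsConsensusContraction ρ
      (fun (Y : Fin M → EuclideanSpace ℝ (Fin d)) i ↦ ∑ j, P i j • Y j) :=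
    isConsensusContraction_of_sum_col_eq_one hP_cols
      (by simpa only [Fintype.card_fin] using hP_contract)
  have hw₁ : consensusDist (w 1) = 0 := by rw [funext hw1, consensusDist_const]
  intro t ht
  simpa only [consensusDist, Fintype.card_fin, ← hΓ, ← hΨ] using
    stmt_9_general hρ hα_nonneg (monotoneOn_nat_Ici_of_le_succ hα_mono) hA (fun _ _ ↦ hG) hw₁
      (fun t ht ↦ funext (hwrec t ht)) (fun t ht ↦ funext (hxrec t ht)) ht
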